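/- arXiv:2307.11312 — 3 statements merged into one kernel-verified Lean document; each statement's English description precedes it below -/
import Mathlib

section
/- Let u, v ∈ L²(ℝ³;ℂ) and k, l > 0 be such that the Fourier transform 𝓕u is supported (a.e.) in the closed ball {ξ : |ξ| ≤ k} and 𝓕v is supported (a.e.) in {ξ : |ξ| ≤ l}. Then the pointwise product u·v belongs to L¹(ℝ³;ℂ) and its Fourier integral 𝓕(uv)(ξ) = ∫_{ℝ³} u(x)v(x) e^{−2πi x·ξ} dx vanishes for every ξ with |ξ| > k + l. -/
/-!
Common setup: the Fourier–Plancherel transform on `L²(ℝ³;ℂ)` (Mathlib's unitary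
Fourier transform with kernel `e^{-2πi x·ξ}`), characterized -- uniquely up to a.e.
equality -- by the multiplication formula against Schwartz functions; sharp
frequency cut-offs; Besov norms; and the notion of Leray–Hopf weak solution.
-/

noncomputable section

open MeasureTheory Real Complex Filter Function
open scoped ENNReal NNReal FourierTransform ComplexConjugate Classical

namespace NSE

abbrev V := EuclideanSpace ℝ (Fin 3)

/-- `IsFourierPair u v` says: `u, v ∈ L²(ℝ³;ℂ)` and `v` is (a version of) the
Fourier–Plancherel transform `𝓕u` of `u` (unitary Fourier transform, kernel
`e^{-2πi x·ξ}`), characterized by the multiplication formula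
`∫ v g = ∫ u 𝓕g` for all Schwartz functions `g`. -/
def IsFourierPair (u v : V → ℂ) : Prop :=
  MemLp u 2 volume ∧ MemLp v 2 volume ∧
    ∀ g : SchwartzMap V ℂ,
      ∫ ξ, v ξ * g ξ = ∫ x, u x * FourierTransform.fourier (⇑g) x

/-- The Fourier–Plancherel transform `𝓕u` of `u ∈ L²` (a choice of representative;
`0` if `u ∉ L²`). -/
def FT (u : V → ℂ) : V → ℂ :=
  if h : ∃ v, IsFourierPair u v then h.choose else 0

/-- The inverse Fourier–Plancherel transform `𝓕⁻¹v` of `v ∈ L²` (a choice of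
representative; `0` if `v ∉ L²`). -/
def FTinv (v : V → ℂ) : V → ℂ :=
  if h : ∃ u, IsFourierPair u v then h.choose else 0

/-- Frequency cut-off: `𝓕⁻¹(1_S · 𝓕u)`. -/
def cut (S : Set V) (u : V → ℂ) : V → ℂ := FTinv (S.indicator (FT u))

/-- High-frequency part `u^k = 𝓕⁻¹(1_{|ξ|≥k} 𝓕u)`. -/
def hi (k : ℝ) (u : V → ℂ) : V → ℂ := cut {ξ : V | k ≤ ‖ξ‖} u

/-- Low-frequency part `u_k = 𝓕⁻¹(1_{|ξ|<k} 𝓕u)`. -/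
def lo (k : ℝ) (u : V → ℂ) : V → ℂ := cut {ξ : V | ‖ξ‖ < k} u

/-- Frequency band `u_{h,k} = 𝓕⁻¹(1_{h≤|ξ|<k} 𝓕u)`. -/
def band (h k : ℝ) (u : V → ℂ) : V → ℂ := cut {ξ : V | h ≤ ‖ξ‖ ∧ ‖ξ‖ < k} u

/-- Sharp dyadic piece `Δ_j v = 𝓕⁻¹(1_{2^{j-1}≤|ξ|<2^j} 𝓕v)`. -/
def Δd (j : ℤ) (v : V → ℂ) : V → ℂ := band ((2:ℝ) ^ (j - 1)) ((2:ℝ) ^ j) v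

/-- `Δ̃₀ v = 𝓕⁻¹(1_{|ξ|<1} 𝓕v)`. -/
def Δt0 (v : V → ℂ) : V → ℂ := lo 1 v

/-- The `L^∞` norm (essential sup norm; for the frequency-localized pieces this is
the sup norm of the bounded continuous representative), valued in `[0,∞]`. -/
def nInf (v : V → ℂ) : ℝ≥0∞ := eLpNorm v ⊤ volume

/-- Inhomogeneous Besov norm `‖v‖_{B^σ_{∞,∞}}`, valued in `[0,∞]`. -/
def besov (σ : ℝ) (v : V → ℂ) : ℝ≥0∞ :=
  max (nInf (Δt0 v))
    (⨆ j : {j : ℕ // 1 ≤ j}, ENNReal.ofReal ((2:ℝ) ^ (σ * (j : ℕ))) * nInf (Δd ((j : ℕ) : ℤ) v))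

/-- Homogeneous Besov norm `‖v‖_{Ḃ^{-1}_{∞,∞}} = sup_{j∈ℤ} 2^{-j} ‖Δ_j v‖_∞`,
valued in `[0,∞]`. -/
def hbesovNeg1 (v : V → ℂ) : ℝ≥0∞ :=
  ⨆ j : ℤ, ENNReal.ofReal ((2:ℝ) ^ (-(j : ℝ))) * nInf (Δd j v)

/-- `i`-th component of a vector field, as a complex-valued function. -/
def comp (w : V → V) (i : Fin 3) : V → ℂ := fun x => ((w x i : ℝ) : ℂ)

/-- `|𝓕w(ξ)|²` (sum over the three components), valued in `[0,∞]`. -/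
def frSq (w : V → V) (ξ : V) : ℝ≥0∞ := ∑ i : Fin 3, (‖FT (comp w i) ξ‖₊ : ℝ≥0∞) ^ 2

/-- `∫ |ξ|² |𝓕w(ξ)|² dξ`. -/
def gradSq (w : V → V) : ℝ≥0∞ := ∫⁻ ξ, (‖ξ‖₊ : ℝ≥0∞) ^ 2 * frSq w ξ

/-- `‖∇w‖_{L²}² = ∫ 4π²|ξ|²|𝓕w(ξ)|² dξ`. -/
def gradSq4π (w : V → V) : ℝ≥0∞ :=
  ∫⁻ ξ, ENNReal.ofReal (4 * π ^ 2) * (‖ξ‖₊ : ℝ≥0∞) ^ 2 * frSq w ξ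

/-- `∫ (1+|ξ|²) |𝓕w(ξ)|² dξ` (squared `H¹` norm). -/
def h1Sq (w : V → V) : ℝ≥0∞ := ∫⁻ ξ, (1 + (‖ξ‖₊ : ℝ≥0∞) ^ 2) * frSq w ξ

/-- `∫ (1+|ξ|²)² |𝓕w(ξ)|² dξ` (squared `H²` norm). -/
def h2Sq (w : V → V) : ℝ≥0∞ := ∫⁻ ξ, (1 + (‖ξ‖₊ : ℝ≥0∞) ^ 2) ^ 2 * frSq w ξ

/-- Divergence-free on the Fourier side: `𝓕w(ξ)·ξ = 0` for a.e. `ξ`. -/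
def DivFreeF (w : V → V) : Prop :=
  ∀ᵐ ξ : V, (∑ i : Fin 3, FT (comp w i) ξ * ((ξ i : ℝ) : ℂ)) = 0

/-- Partial derivative `∂_i f (x)` of a scalar field. -/
def pd (f : V → ℝ) (i : Fin 3) (x : V) : ℝ :=
  fderiv ℝ f x (EuclideanSpace.single i (1:ℝ))

/-- A Leray–Hopf weak solution of the 3D Navier–Stokes equations on `(0,∞)×ℝ³`
with viscosity `ν` and divergence-free initial datum `u₀ ∈ L²(ℝ³;ℝ³)`. -/
structure IsLerayHopf (ν : ℝ) (u₀ : V → V) (u : ℝ → V → V) : Prop where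
  /-- measurability of `u` -/
  meas : Measurable (Function.uncurry u)
  /-- `u(t) ∈ L²` for `t > 0` -/
  memL2 : ∀ t : ℝ, 0 < t → MemLp (u t) 2 volume
  /-- (i) `ess sup_{t>0} ‖u(t)‖_{L²} < ∞` -/
  bddL2 : essSup (fun t => eLpNorm (u t) 2 volume) (volume.restrict (Set.Ioi (0:ℝ))) < ⊤
  /-- (i) `∫₀^∞ ∫ |ξ|²|𝓕u(t)(ξ)|² dξ dt < ∞` -/
  gradL2 : (∫⁻ t in Set.Ioi (0:ℝ), gradSq (u t)) < ⊤
  /-- (ii) `u(t)` is divergence-free for a.e. `t` -/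
  divFree : ∀ᵐ t ∂(volume.restrict (Set.Ioi (0:ℝ))), DivFreeF (u t)
  /-- (iii) the weak formulation against smooth compactly supported
  divergence-free test fields -/
  weak : ∀ φ : ℝ → V → V, ContDiff ℝ (⊤ : ℕ∞) (Function.uncurry φ) →
      HasCompactSupport (Function.uncurry φ) →
      (∀ t x, (∑ i : Fin 3, pd (fun y => φ t y i) i x) = 0) →
      (∫ t in Set.Ioi (0:ℝ), ∫ x,
          ((∑ j : Fin 3, u t x j * deriv (fun s => φ s x j) t)
            + ν * (∑ j : Fin 3, u t x j *
                ∑ i : Fin 3, pd (fun y => pd (fun z => φ t z j) i y) i x)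
            + ∑ i : Fin 3, ∑ j : Fin 3, u t x i * u t x j * pd (fun y => φ t y j) i x))
        + (∫ x, ∑ j : Fin 3, u₀ x j * φ 0 x j) = 0
  /-- (iv) the energy inequality for a.e. `t > 0` -/
  energy : ∀ᵐ t ∂(volume.restrict (Set.Ioi (0:ℝ))),
      (1/2 : ℝ≥0∞) * eLpNorm (u t) 2 volume ^ 2
          + ENNReal.ofReal ν * ∫⁻ τ in Set.Ioc (0:ℝ) t, gradSq4π (u τ)
        ≤ (1/2 : ℝ≥0∞) * eLpNorm u₀ 2 volume ^ 2

/-- `u` is regular in `(0,T]`: `u ∈ L^∞(0,T;H¹) ∩ L²(0,T;H²)`. -/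
def RegularOn (u : ℝ → V → V) (T : ℝ) : Prop :=
  essSup (fun t => h1Sq (u t)) (volume.restrict (Set.Ioo (0:ℝ) T)) < ⊤ ∧
    (∫⁻ t in Set.Ioo (0:ℝ) T, h2Sq (u t)) < ⊤

/-- Besov norm of a vector field: the largest Besov norm of its components. -/
def besovV (σ : ℝ) (w : V → V) : ℝ≥0∞ := ⨆ i : Fin 3, besov σ (comp w i)

/-!
Multiplication is turned into convolution: for `f`, `g` in `L²` one has `𝓕 (f g) = 𝓕 f ⋆ 𝓕 g` at
every frequency. Both sides are jointly continuous in `(f, g) ∈ L² × L²` (Hölder and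
Plancherel), so it is enough to know the identity on the dense subspace of Schwartz functions. A
convolution vanishes off the sum of the supports of its factors, and
`closedBall 0 k + closedBall 0 l ⊆ closedBall 0 (k + l)`.
-/

section Convolution

open scoped Convolution Pointwise

variable {𝕜 G F₁ F₂ F₃ : Type*} [NontriviallyNormedField 𝕜]
  [NormedAddCommGroup F₁] [NormedSpace 𝕜 F₁] [NormedAddCommGroup F₂] [NormedSpace 𝕜 F₂]
  [NormedAddCommGroup F₃] [NormedSpace 𝕜 F₃] [NormedSpace ℝ F₃]
  [AddCommGroup G] [MeasurableSpace G] {μ : Measure G}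

theorem convolution_eq_zero_of_notMem_add [MeasurableAdd₂ G] [MeasurableNeg G] [SFinite μ]
    [μ.IsAddRightInvariant] (B : F₁ →L[𝕜] F₂ →L[𝕜] F₃) {f : G → F₁} {g : G → F₂} {S T : Set G}
    (hf : ∀ᵐ x ∂μ, x ∉ S → f x = 0) (hg : ∀ᵐ x ∂μ, x ∉ T → g x = 0) {x : G} (hx : x ∉ S + T) :
    (f ⋆[B, μ] g) x = 0 := by
  have hfS : f =ᵐ[μ] S.indicator f := by
    filter_upwards [hf] with y hy using (Set.indicator_apply_eq_self.mpr hy).symm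
  have hgT : g =ᵐ[μ] T.indicator g := by
    filter_upwards [hg] with y hy using (Set.indicator_apply_eq_self.mpr hy).symm
  rw [convolution_congr B hfS hgT]
  refine notMem_support.mp fun hmem => hx ?_
  exact Set.add_subset_add Set.support_indicator_subset Set.support_indicator_subset
    (support_convolution_subset B hmem)

variable [SMulCommClass ℝ 𝕜 F₃] [CompleteSpace F₃] [MeasurableAdd G] [MeasurableNeg G]
  [μ.IsAddLeftInvariant] [μ.IsNegInvariant]
  {p q : ℝ≥0∞} [Fact (1 ≤ p)] [Fact (1 ≤ q)] [p.HolderConjugate q]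

theorem lpPairing_compMeasurePreserving_sub_left (B : F₁ →L[𝕜] F₂ →L[𝕜] F₃)
    (f : Lp F₁ p μ) (g : Lp F₂ q μ) (x : G) :
    B.lpPairing μ p q f
        (Lp.compMeasurePreserving (x - ·) (Measure.measurePreserving_sub_left μ x) g) =
      (f ⋆[B, μ] g) x := by
  rw [ContinuousLinearMap.lpPairing_eq_integral]
  refine integral_congr_ae ?_
  filter_upwards [Lp.coeFn_compMeasurePreserving g (Measure.measurePreserving_sub_left μ x)]
    with t ht
  rw [ht, comp_apply]

theorem continuous_convolution_Lp (B : F₁ →L[𝕜] F₂ →L[𝕜] F₃) (x : G) :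
    Continuous fun fg : Lp F₁ p μ × Lp F₂ q μ => (fg.1 ⋆[B, μ] fg.2) x := by
  simp only [← lpPairing_compMeasurePreserving_sub_left]
  have hτ : Continuous fun g : Lp F₂ q μ =>
      Lp.compMeasurePreserving (x - ·) (Measure.measurePreserving_sub_left μ x) g :=
    (Lp.isometry_compMeasurePreserving _).continuous
  exact (B.lpPairing μ p q).continuous₂.comp (continuous_fst.prodMk (hτ.comp continuous_snd))

end Convolution

section FourierOfProduct

open scoped Convolution SchwartzMap Pointwise

variable {E F F₁ F₂ F₃ : Type*} [NormedAddCommGroup E] [InnerProductSpace ℝ E]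
  [FiniteDimensional ℝ E] [MeasurableSpace E] [BorelSpace E]

theorem schwartz_fourierInv_apply [NormedAddCommGroup F] [NormedSpace ℂ F] (f : 𝓢(E, F)) (x : E) :
    𝓕⁻ f x = 𝓕 ⇑f (-x) := by
  rw [SchwartzMap.fourierInv_coe, Real.fourierInv_eq_fourier_neg]

theorem schwartz_fourierInv_pairing
    [NormedAddCommGroup F₁] [NormedSpace ℂ F₁] [CompleteSpace F₁]
    [NormedAddCommGroup F₂] [NormedSpace ℂ F₂] [CompleteSpace F₂]
    [NormedAddCommGroup F₃] [NormedSpace ℂ F₃]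
    (B : F₁ →L[ℂ] F₂ →L[ℂ] F₃) (f : 𝓢(E, F₁)) (g : 𝓢(E, F₂)) :
    𝓕⁻ (SchwartzMap.pairing B f g) = SchwartzMap.convolution B (𝓕⁻ f) (𝓕⁻ g) := by
  simp [SchwartzMap.convolution]

theorem fourier_schwartz_bilin_eq_convolution
    [NormedAddCommGroup F₁] [NormedSpace ℂ F₁] [CompleteSpace F₁]
    [NormedAddCommGroup F₂] [NormedSpace ℂ F₂] [CompleteSpace F₂]
    [NormedAddCommGroup F₃] [NormedSpace ℂ F₃] [CompleteSpace F₃]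
    (B : F₁ →L[ℂ] F₂ →L[ℂ] F₃) (f : 𝓢(E, F₁)) (g : 𝓢(E, F₂)) (ξ : E) :
    𝓕 (fun x => B (f x) (g x)) ξ = (𝓕 ⇑f ⋆[B] 𝓕 ⇑g) ξ :=
  calc 𝓕 (fun x => B (f x) (g x)) ξ
    _ = 𝓕⁻ (SchwartzMap.pairing B f g) (-ξ) := by
        rw [schwartz_fourierInv_apply, neg_neg, SchwartzMap.pairing_apply]
    _ = ∫ t, B (𝓕⁻ f t) (𝓕⁻ g (-ξ - t)) := by
        rw [schwartz_fourierInv_pairing, SchwartzMap.convolution_apply, convolution_def]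
    _ = ∫ t, B (𝓕 ⇑f (-t)) (𝓕 ⇑g (ξ - -t)) := by
        simp only [schwartz_fourierInv_apply, neg_sub', neg_neg]
    _ = (𝓕 ⇑f ⋆[B] 𝓕 ⇑g) ξ :=
        integral_neg_eq_self (fun t => B (𝓕 ⇑f t) (𝓕 ⇑g (ξ - t))) volume

theorem continuous_fourier_bilin_Lp {p q : ℝ≥0∞} [Fact (1 ≤ p)] [Fact (1 ≤ q)] [p.HolderConjugate q]
    [NormedAddCommGroup F₁] [NormedSpace ℂ F₁] [NormedAddCommGroup F₂] [NormedSpace ℂ F₂]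
    [NormedAddCommGroup F₃] [NormedSpace ℂ F₃] (B : F₁ →L[ℂ] F₂ →L[ℂ] F₃) (ξ : E) :
    Continuous fun fg : Lp (α := E) F₁ p × Lp (α := E) F₂ q =>
      𝓕 (fun x => B (fg.1 x) (fg.2 x)) ξ := by
  have fourier_holder (fg : Lp (α := E) F₁ p × Lp (α := E) F₂ q) :
      𝓕 (fun x => B (fg.1 x) (fg.2 x)) ξ =
        Real.Lp.fourierTransformCLM E F₃ (B.holderL volume p q 1 fg.1 fg.2) ξ :=
    Real.fourier_congr_ae (B.coeFn_holder (r := 1) fg.1 fg.2).symm ξ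
  simp only [fourier_holder]
  exact (continuous_eval_const ξ).comp
    ((Real.Lp.fourierTransformCLM E F₃).continuous.comp (B.holderL volume p q 1).continuous₂)

/-- The Fourier–Plancherel transform of a square-integrable function, as an element of `L²`. It
extends the transform that `FT` represents on `V` to all finite-dimensional domains and all
Hilbert-space-valued functions. -/
def fourierL2 [NormedAddCommGroup F] [InnerProductSpace ℂ F] [CompleteSpace F] (u : E → F)
    (hu : MemLp u 2) : Lp (α := E) F 2 :=
  𝓕 (hu.toLp u)

variable [NormedAddCommGroup F₁] [InnerProductSpace ℂ F₁] [CompleteSpace F₁]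
  [NormedAddCommGroup F₂] [InnerProductSpace ℂ F₂] [CompleteSpace F₂]
  [NormedAddCommGroup F₃] [NormedSpace ℂ F₃] [CompleteSpace F₃]

theorem fourier_bilin_Lp_eq_convolution (B : F₁ →L[ℂ] F₂ →L[ℂ] F₃)
    (f : Lp (α := E) F₁ 2) (g : Lp (α := E) F₂ 2) (ξ : E) :
    𝓕 (fun x => B (f x) (g x)) ξ =
      ((𝓕 f : Lp (α := E) F₁ 2) ⋆[B] (𝓕 g : Lp (α := E) F₂ 2)) ξ := by
  have eq_on_schwartz (φ : 𝓢(E, F₁)) (ψ : 𝓢(E, F₂)) :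
      𝓕 (fun x => B (φ.toLp 2 volume x) (ψ.toLp 2 volume x)) ξ =
        ((𝓕 (φ.toLp 2) : Lp (α := E) F₁ 2) ⋆[B] (𝓕 (ψ.toLp 2) : Lp (α := E) F₂ 2)) ξ := by
    have hφψ : (fun x => B (φ.toLp 2 volume x) (ψ.toLp 2 volume x)) =ᵐ[volume]
        fun x => B (φ x) (ψ x) := by
      filter_upwards [φ.coeFn_toLp 2 volume, ψ.coeFn_toLp 2 volume] with x hφ hψ
      rw [hφ, hψ]
    rw [Real.fourier_congr_ae hφψ, fourier_schwartz_bilin_eq_convolution,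
      ← SchwartzMap.fourier_coe, ← SchwartzMap.fourier_coe,
      convolution_congr B ((𝓕 φ).coeFn_toLp 2 volume).symm ((𝓕 ψ).coeFn_toLp 2 volume).symm,
      SchwartzMap.toLp_fourier_eq, SchwartzMap.toLp_fourier_eq]
  have dense : DenseRange (Prod.map (SchwartzMap.toLpCLM ℂ (E := E) F₁ 2 volume)
      (SchwartzMap.toLpCLM ℂ (E := E) F₂ 2 volume)) :=
    (SchwartzMap.denseRange_toLpCLM (p := 2) ENNReal.ofNat_ne_top).prodMap
      (SchwartzMap.denseRange_toLpCLM (p := 2) ENNReal.ofNat_ne_top)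
  have continuous_rhs := (continuous_convolution_Lp (p := 2) (q := 2) (μ := volume) B ξ).comp
    ((Lp.fourierTransformₗᵢ E F₁).continuous.prodMap (Lp.fourierTransformₗᵢ E F₂).continuous)
  exact congrFun (dense.equalizer (continuous_fourier_bilin_Lp B ξ) continuous_rhs
    (funext fun φψ => eq_on_schwartz φψ.1 φψ.2)) (f, g)

theorem fourier_bilin_eq_convolution_fourierL2 (B : F₁ →L[ℂ] F₂ →L[ℂ] F₃) {u : E → F₁} {v : E → F₂}
    (hu : MemLp u 2) (hv : MemLp v 2) (ξ : E) :
    𝓕 (fun x => B (u x) (v x)) ξ = (fourierL2 u hu ⋆[B] fourierL2 v hv) ξ := by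
  have huv : (fun x => B (u x) (v x)) =ᵐ[volume] fun x => B (hu.toLp u x) (hv.toLp v x) := by
    filter_upwards [hu.coeFn_toLp, hv.coeFn_toLp] with x hux hvx
    rw [hux, hvx]
  rw [Real.fourier_congr_ae huv, fourier_bilin_Lp_eq_convolution, fourierL2, fourierL2]

theorem fourierIntegral_mul_eq_zero_of_support_general (B : F₁ →L[ℂ] F₂ →L[ℂ] F₃)
    {u : E → F₁} {v : E → F₂} (hu : MemLp u 2) (hv : MemLp v 2) {S T : Set E}
    (hsu : ∀ᵐ ξ : E, ξ ∉ S → fourierL2 u hu ξ = 0)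
    (hsv : ∀ᵐ ξ : E, ξ ∉ T → fourierL2 v hv ξ = 0) :
    Integrable (fun x => B (u x) (v x)) ∧
      ∀ ξ ∉ S + T, 𝓕 (fun x => B (u x) (v x)) ξ = 0 := by
  refine ⟨memLp_one_iff_integrable.mp (B.memLp_of_bilin 1 hu hv), fun ξ hξ => ?_⟩
  rw [fourier_bilin_eq_convolution_fourierL2 B hu hv]
  exact convolution_eq_zero_of_notMem_add B hsu hsv hξ

theorem toLp_eq_fourierL2_iff [NormedAddCommGroup F] [InnerProductSpace ℂ F] [CompleteSpace F]
    {u v : E → F} (hu : MemLp u 2) (hv : MemLp v 2) :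
    hv.toLp v = fourierL2 u hu ↔
      ∀ g : 𝓢(E, ℂ), ∫ ξ, g ξ • v ξ = ∫ x, 𝓕 ⇑g x • u x := by
  have pairing_toLp {w : E → F} (hw : MemLp w 2) (g : 𝓢(E, ℂ)) :
      Lp.toTemperedDistribution (hw.toLp w) g = ∫ x, g x • w x := by
    rw [Lp.toTemperedDistribution_apply]
    refine integral_congr_ae ?_
    filter_upwards [hw.coeFn_toLp] with x hx
    rw [hx]
  have injective := LinearMap.ker_eq_bot.mp
    (Lp.ker_toTemperedDistributionCLM_eq_bot (E := E) (F := F) (μ := volume) (p := 2))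
  calc hv.toLp v = fourierL2 u hu
    _ ↔ Lp.toTemperedDistribution (hv.toLp v) =
          𝓕 (Lp.toTemperedDistribution (hu.toLp u)) := by
        rw [Lp.fourier_toTemperedDistribution_eq]
        exact injective.eq_iff.symm
    _ ↔ ∀ g : 𝓢(E, ℂ), ∫ ξ, g ξ • v ξ = ∫ x, 𝓕 ⇑g x • u x := by
        simp only [DFunLike.ext_iff, TemperedDistribution.fourier_apply, pairing_toLp,
          SchwartzMap.fourier_coe]

end FourierOfProduct

theorem isFourierPair_iff_toLp_eq_fourierL2 {u v : V → ℂ} (hu : MemLp u 2) (hv : MemLp v 2) :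
    IsFourierPair u v ↔ hv.toLp v = fourierL2 u hu := by
  simp only [IsFourierPair, hu, hv, true_and, toLp_eq_fourierL2_iff hu hv, smul_eq_mul, mul_comm]

theorem FT_ae_eq_fourierL2 {u : V → ℂ} (hu : MemLp u 2) : FT u =ᵐ[volume] fourierL2 u hu := by
  have exists_pair : ∃ v, IsFourierPair u v :=
    ⟨fourierL2 u hu, (isFourierPair_iff_toLp_eq_fourierL2 hu (Lp.memLp _)).mpr (Lp.toLp_coeFn _ _)⟩
  have isFourierPair_FT : IsFourierPair u (FT u) := by
    rw [FT, dif_pos exists_pair]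
    exact exists_pair.choose_spec
  have hFT : MemLp (FT u) 2 := isFourierPair_FT.2.1
  rw [← (isFourierPair_iff_toLp_eq_fourierL2 hu hFT).mp isFourierPair_FT]
  exact hFT.coeFn_toLp.symm

/-- If `𝓕u` is supported in `{|ξ| ≤ k}` and `𝓕v` in `{|ξ| ≤ l}`,
then `uv ∈ L¹` and its Fourier integral vanishes for `|ξ| > k + l`. -/
theorem fourierIntegral_mul_eq_zero_of_support
    (u v : V → ℂ) (hu : MemLp u 2 volume) (hv : MemLp v 2 volume)
    (k l : ℝ) (hk : 0 < k) (hl : 0 < l)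
    (hsu : ∀ᵐ ξ : V, k < ‖ξ‖ → FT u ξ = 0)
    (hsv : ∀ᵐ ξ : V, l < ‖ξ‖ → FT v ξ = 0) :
    Integrable (fun x => u x * v x) volume ∧
      ∀ ξ : V, k + l < ‖ξ‖ → FourierTransform.fourier (fun x => u x * v x) ξ = 0 := by
  have ae_eq_zero {w : V → ℂ} (hw : MemLp w 2) {r : ℝ} (hsw : ∀ᵐ ξ : V, r < ‖ξ‖ → FT w ξ = 0) :
      ∀ᵐ ξ : V, ξ ∉ Metric.closedBall 0 r → fourierL2 w hw ξ = 0 := by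
    filter_upwards [hsw, FT_ae_eq_fourierL2 hw] with ξ hξ hFT hr
    rw [← hFT, hξ (by simpa using hr)]
  refine (fourierIntegral_mul_eq_zero_of_support_general (.mul ℂ ℂ) hu hv
    (ae_eq_zero hu hsu) (ae_eq_zero hv hsv)).imp_right fun h ξ hξ => h ξ ?_
  rw [closedBall_add_closedBall hk.le hl.le, add_zero]
  simpa using hξ

end NSE
end
end

section
/- Let μ be a measure on ℝ³, let s ≥ 1 be a natural number, let m̃ > 1 be a real number, and let l be a natural number with l ≥ 1/(m̃^{1/s} − 1). Write H(r) := μ{ξ : |ξ| ≥ r} and A(r₁,r₂) := μ{ξ : r₁ ≤ |ξ| < r₂}. Then, in [0,∞]: Σ_{j=l}^∞ A(j^s/2, m̃·j^s) ≤ H(l^s/2) + ((2m̃)^{1/s} − 1)·( l·A(l^s/2, m̃·l^s) + Σ_{j=l}^∞ j·A(j^s, (j+1)^s) ). (Applied in the paper with dμ = |ξ|²|𝓕u(ξ)|²dξ, this bounds Σ_{j≥l}‖∇u_{j^s/2, m̃ j^s}‖_{L²}².) -/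
/-!
Common setup: the Fourier–Plancherel transform on `L²(ℝ³;ℂ)` (Mathlib's unitary
Fourier transform with kernel `e^{-2πi x·ξ}`), characterized -- uniquely up to a.e.
equality -- by the multiplication formula against Schwartz functions; sharp
frequency cut-offs; Besov norms; and the notion of Leray–Hopf weak solution.
-/

noncomputable section

open MeasureTheory Real Complex Filter Function
open scoped ENNReal NNReal FourierTransform ComplexConjugate Classical

namespace NSE

/-!
After the substitution `t = |ξ|^{1/s}`, and with `b = 2^{1/s}`, `m = m̃^{1/s}`, the annuli become
the intervals `[j/b, m j)` on the line. A point `t` lies in the `j`-th of them only if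
`y ≤ j ≤ b t` for `y := max l (t/m)`, so the number of `j ≥ l` for which it does is at most
`1 + (b t - y) ≤ 1 + (b m - 1) y`. If `t < m l` then `y = l`; otherwise `y = t/m ≤ ⌊t⌋`, because
`l (m - 1) ≥ 1`. So for `t ≥ l/b`, below which the number is zero, `y` is at most
`l 1_{[l/b, m l)}(t) + Σ_{j≥l} j 1_{[j, j+1)}(t)`. Integrating over `t` with respect to the image
of `μ` gives the estimate.
-/

section Multiplicity

open Set

theorem encard_preimage_natCast_Icc_le (y z : ℝ) :
    (((Nat.cast : ℕ → ℝ) ⁻¹' Icc y z).encard : ℝ≥0∞) ≤ 1 + ENNReal.ofReal (z - y) := by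
  rcases lt_or_ge z 0 with hz | hz
  · have hempty : (Nat.cast : ℕ → ℝ) ⁻¹' Icc y z = ∅ :=
      eq_empty_of_forall_notMem fun j hj => (hz.trans_le j.cast_nonneg).not_ge hj.2
    simp [hempty]
  rw [Nat.preimage_Icc hz, ← Finset.coe_Icc, encard_coe_eq_coe_finsetCard, Nat.card_Icc]
  rcases le_total (⌊z⌋₊ + 1) ⌈y⌉₊ with h | h
  · simp [Nat.sub_eq_zero_of_le h]
  have hcard : ((⌊z⌋₊ + 1 - ⌈y⌉₊ : ℕ) : ℝ) ≤ 1 + (z - y) := by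
    push_cast [Nat.cast_sub h]
    linarith [Nat.floor_le hz, Nat.le_ceil y]
  calc (((⌊z⌋₊ + 1 - ⌈y⌉₊ : ℕ) : ℕ∞) : ℝ≥0∞)
      = ENNReal.ofReal ((⌊z⌋₊ + 1 - ⌈y⌉₊ : ℕ) : ℝ) := by simp
    _ ≤ ENNReal.ofReal (1 + (z - y)) := ENNReal.ofReal_le_ofReal hcard
    _ ≤ ENNReal.ofReal 1 + ENNReal.ofReal (z - y) := ENNReal.ofReal_add_le
    _ = 1 + ENNReal.ofReal (z - y) := by rw [ENNReal.ofReal_one]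

theorem tsum_indicator_one_eq_encard {ι α : Type*} (A : ι → Set α) (x : α) :
    ∑' i, (A i).indicator (1 : α → ℝ≥0∞) x = ({i | x ∈ A i}.encard : ℝ≥0∞) :=
  calc ∑' i, (A i).indicator (1 : α → ℝ≥0∞) x
      = ∑' i, {i | x ∈ A i}.indicator (fun _ => (1 : ℝ≥0∞)) i := rfl
    _ = ∑' _ : {i | x ∈ A i}, (1 : ℝ≥0∞) := (tsum_subtype _ _).symm
    _ = _ := ENNReal.tsum_set_one _

theorem tsum_indicator_Ico_le_max {b m : ℝ} (hb : 0 < b) (hm : 0 < m) (l : ℕ) (t : ℝ) :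
    ∑' n : ℕ, (Ico (((l + n : ℕ) : ℝ) / b) (m * ((l + n : ℕ) : ℝ))).indicator
        (1 : ℝ → ℝ≥0∞) t
      ≤ 1 + ENNReal.ofReal (b * m - 1) * ENNReal.ofReal (max (l : ℝ) (t / m)) := by
  set y := max (l : ℝ) (t / m)
  have hy : 0 ≤ y := l.cast_nonneg.trans (le_max_left _ _)
  have hty : t ≤ m * y := (div_le_iff₀' hm).1 (le_max_right _ _)
  have hmaps : MapsTo (l + ·) {n : ℕ | t ∈ Ico (((l + n : ℕ) : ℝ) / b) (m * ((l + n : ℕ) : ℝ))}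
      ((Nat.cast : ℕ → ℝ) ⁻¹' Icc y (b * t)) := fun n hn =>
    ⟨max_le (by simp) ((div_le_iff₀' hm).2 hn.2.le), (div_le_iff₀' hb).1 hn.1⟩
  calc _ = (({n : ℕ | t ∈ Ico (((l + n : ℕ) : ℝ) / b) (m * ((l + n : ℕ) : ℝ))}.encard : ℕ∞) :
        ℝ≥0∞) := tsum_indicator_one_eq_encard _ t
    _ ≤ (((Nat.cast : ℕ → ℝ) ⁻¹' Icc y (b * t)).encard : ℝ≥0∞) := by
      exact_mod_cast encard_le_encard_of_injOn hmaps (add_right_injective l).injOn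
    _ ≤ 1 + ENNReal.ofReal (b * t - y) := encard_preimage_natCast_Icc_le _ _
    _ ≤ 1 + ENNReal.ofReal ((b * m - 1) * y) := by
      gcongr
      linarith [mul_le_mul_of_nonneg_left hty hb.le]
    _ = _ := by rw [ENNReal.ofReal_mul' hy]

theorem one_lt_of_one_le_mul_sub_one {R : Type*} [CommRing R] [LinearOrder R]
    [IsStrictOrderedRing R] {m : R} {l : ℕ} (hl : 1 ≤ l * (m - 1)) : 1 < m :=
  sub_pos.1 (pos_of_mul_pos_right (one_pos.trans_le hl) l.cast_nonneg)

theorem le_mul_natFloor {R : Type*} [CommRing R] [LinearOrder R] [IsStrictOrderedRing R]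
    [FloorSemiring R] {m t : R} {l : ℕ} (hl : 1 ≤ l * (m - 1)) (hlt : l ≤ ⌊t⌋₊) :
    t ≤ m * ⌊t⌋₊ := by
  have hm : 0 ≤ m - 1 := (sub_pos.2 (one_lt_of_one_le_mul_sub_one hl)).le
  calc t ≤ ⌊t⌋₊ + 1 := (Nat.lt_floor_add_one t).le
    _ ≤ ⌊t⌋₊ + l * (m - 1) := by gcongr
    _ ≤ ⌊t⌋₊ + ⌊t⌋₊ * (m - 1) := by gcongr
    _ = m * ⌊t⌋₊ := by ring

theorem ofReal_max_div_le {a m t : ℝ} {l : ℕ} (hl : 1 ≤ l * (m - 1)) (hat : a ≤ t) :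
    ENNReal.ofReal (max (l : ℝ) (t / m))
      ≤ (Ico a (m * l)).indicator (fun _ => (l : ℝ≥0∞)) t
        + ∑' n : ℕ, (Ico ((l + n : ℕ) : ℝ) ((l + n + 1 : ℕ) : ℝ)).indicator
            (fun _ => ((l + n : ℕ) : ℝ≥0∞)) t := by
  have hm : 1 < m := one_lt_of_one_le_mul_sub_one hl
  have hm₀ : 0 < m := one_pos.trans hm
  rcases lt_or_ge t (m * l) with ht | ht
  · rw [max_eq_left ((div_le_iff₀' hm₀).2 ht.le), ENNReal.ofReal_natCast,
      indicator_of_mem (show t ∈ Ico a (m * l) from ⟨hat, ht⟩)]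
    exact le_self_add
  have hlt : (l : ℝ) ≤ t := (le_mul_of_one_le_left l.cast_nonneg hm.le).trans ht
  have hfloor : l ≤ ⌊t⌋₊ := Nat.le_floor hlt
  obtain ⟨n, hn⟩ := Nat.exists_eq_add_of_le hfloor
  have hmem : t ∈ Ico ((l + n : ℕ) : ℝ) ((l + n + 1 : ℕ) : ℝ) := by
    rw [← hn]
    exact ⟨Nat.floor_le (l.cast_nonneg.trans hlt), by exact_mod_cast Nat.lt_floor_add_one t⟩
  calc ENNReal.ofReal (max (l : ℝ) (t / m))
      = ENNReal.ofReal (t / m) := by rw [max_eq_right ((le_div_iff₀' hm₀).2 ht)]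
    _ ≤ ENNReal.ofReal (⌊t⌋₊ : ℝ) :=
      ENNReal.ofReal_le_ofReal ((div_le_iff₀' hm₀).2 (le_mul_natFloor hl hfloor))
    _ = (Ico ((l + n : ℕ) : ℝ) ((l + n + 1 : ℕ) : ℝ)).indicator
          (fun _ => ((l + n : ℕ) : ℝ≥0∞)) t := by
      rw [indicator_of_mem hmem, ENNReal.ofReal_natCast, hn]
    _ ≤ _ := (ENNReal.le_tsum n).trans le_add_self

theorem tsum_indicator_Ico_le_indicator {b m : ℝ} {l : ℕ} (hb : 0 < b)
    (hl : 1 ≤ l * (m - 1)) (t : ℝ) :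
    ∑' n : ℕ, (Ico (((l + n : ℕ) : ℝ) / b) (m * ((l + n : ℕ) : ℝ))).indicator
        (1 : ℝ → ℝ≥0∞) t
      ≤ (Ici ((l : ℝ) / b)).indicator 1 t + ENNReal.ofReal (b * m - 1) *
          ((Ico ((l : ℝ) / b) (m * l)).indicator (fun _ => (l : ℝ≥0∞)) t
            + ∑' n : ℕ, (Ico ((l + n : ℕ) : ℝ) ((l + n + 1 : ℕ) : ℝ)).indicator
                (fun _ => ((l + n : ℕ) : ℝ≥0∞)) t) := by
  have hm : 0 < m := one_pos.trans (one_lt_of_one_le_mul_sub_one hl)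
  by_cases ht : (l : ℝ) / b ≤ t
  · rw [indicator_of_mem (mem_Ici.2 ht), Pi.one_apply]
    exact (tsum_indicator_Ico_le_max hb hm l t).trans (by gcongr; exact ofReal_max_div_le hl ht)
  · have hnotMem (n : ℕ) : t ∉ Ico (((l + n : ℕ) : ℝ) / b) (m * ((l + n : ℕ) : ℝ)) :=
      fun h => ht (le_trans (by gcongr; simp) h.1)
    simp only [indicator_of_notMem (hnotMem _), tsum_zero, zero_le]

theorem tsum_measure_Ico_le (ν : Measure ℝ) {b m : ℝ} {l : ℕ} (hb : 0 < b)
    (hl : 1 ≤ l * (m - 1)) :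
    ∑' n : ℕ, ν (Ico (((l + n : ℕ) : ℝ) / b) (m * ((l + n : ℕ) : ℝ)))
      ≤ ν (Ici ((l : ℝ) / b)) + ENNReal.ofReal (b * m - 1) *
          ((l : ℝ≥0∞) * ν (Ico ((l : ℝ) / b) (m * l))
            + ∑' n : ℕ, ((l + n : ℕ) : ℝ≥0∞) *
                ν (Ico ((l + n : ℕ) : ℝ) ((l + n + 1 : ℕ) : ℝ))) := by
  have hmeas (u v : ℝ) (c : ℝ≥0∞) : Measurable ((Ico u v).indicator fun _ => c) :=
    measurable_const.indicator measurableSet_Ico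
  calc ∑' n : ℕ, ν (Ico (((l + n : ℕ) : ℝ) / b) (m * ((l + n : ℕ) : ℝ)))
      = ∫⁻ t, ∑' n : ℕ, (Ico (((l + n : ℕ) : ℝ) / b) (m * ((l + n : ℕ) : ℝ))).indicator 1 t ∂ν := by
        rw [lintegral_tsum fun n => (measurable_one.indicator measurableSet_Ico).aemeasurable]
        simp only [lintegral_indicator_one measurableSet_Ico]
    _ ≤ _ := lintegral_mono (tsum_indicator_Ico_le_indicator hb hl)
    _ = _ := by
      rw [lintegral_add_left (measurable_one.indicator measurableSet_Ici),
        lintegral_const_mul' _ _ ENNReal.ofReal_ne_top, lintegral_add_left (hmeas _ _ _),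
        lintegral_tsum fun n => (hmeas _ _ _).aemeasurable]
      simp only [lintegral_indicator_one measurableSet_Ici,
        lintegral_indicator_const measurableSet_Ico]

end Multiplicity

section Radius

variable {α : Type*} [MeasurableSpace α] (μ : Measure α) {f : α → ℝ} {s : ℝ}

theorem map_rpow_inv_Ici (hf : AEMeasurable f μ) (hf₀ : ∀ x, 0 ≤ f x) (hs : 0 < s) {u : ℝ}
    (hu : 0 ≤ u) :
    μ.map (fun x => f x ^ s⁻¹) (Set.Ici u) = μ {x | u ^ s ≤ f x} := by
  rw [Measure.map_apply_of_aemeasurable (hf.pow_const _) measurableSet_Ici]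
  congr 1 with x
  exact Real.le_rpow_inv_iff_of_pos hu (hf₀ x) hs

theorem map_rpow_inv_Ico (hf : AEMeasurable f μ) (hf₀ : ∀ x, 0 ≤ f x) (hs : 0 < s) {u v : ℝ}
    (hu : 0 ≤ u) (hv : 0 ≤ v) :
    μ.map (fun x => f x ^ s⁻¹) (Set.Ico u v) = μ {x | u ^ s ≤ f x ∧ f x < v ^ s} := by
  rw [Measure.map_apply_of_aemeasurable (hf.pow_const _) measurableSet_Ico]
  congr 1 with x
  exact and_congr (Real.le_rpow_inv_iff_of_pos hu (hf₀ x) hs)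
    (Real.rpow_inv_lt_iff_of_pos (hf₀ x) hv hs)

theorem tsum_annulus_le_general (hf : AEMeasurable f μ) (hf₀ : ∀ x, 0 ≤ f x) (hs : 0 < s)
    {κ m : ℝ} (hκ : 0 < κ) (hm : 1 < m) {l : ℕ} (hl : 1 / (m ^ (1 / s) - 1) ≤ (l : ℝ)) :
    ∑' n : ℕ, μ {x | ((l + n : ℕ) : ℝ) ^ s / κ ≤ f x ∧ f x < m * ((l + n : ℕ) : ℝ) ^ s}
      ≤ μ {x | (l : ℝ) ^ s / κ ≤ f x}
        + ENNReal.ofReal ((κ * m) ^ (1 / s) - 1) *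
          ((l : ℝ≥0∞) * μ {x | (l : ℝ) ^ s / κ ≤ f x ∧ f x < m * (l : ℝ) ^ s}
            + ∑' n : ℕ, ((l + n : ℕ) : ℝ≥0∞) *
                μ {x | ((l + n : ℕ) : ℝ) ^ s ≤ f x ∧ f x < ((l + n + 1 : ℕ) : ℝ) ^ s}) := by
  have hm₀ : 0 < m := one_pos.trans hm
  rw [one_div s] at hl ⊢
  have hroot : 0 < m ^ s⁻¹ - 1 := sub_pos.2 (Real.one_lt_rpow hm (inv_pos.2 hs))
  have hinner (j : ℕ) : ((j : ℝ) / κ ^ s⁻¹) ^ s = (j : ℝ) ^ s / κ := by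
    rw [Real.div_rpow j.cast_nonneg (by positivity), Real.rpow_inv_rpow hκ.le hs.ne']
  have houter (j : ℕ) : (m ^ s⁻¹ * (j : ℝ)) ^ s = m * (j : ℝ) ^ s := by
    rw [Real.mul_rpow (by positivity) j.cast_nonneg, Real.rpow_inv_rpow hm₀.le hs.ne']
  have hline := tsum_measure_Ico_le (μ.map fun x => f x ^ s⁻¹) (Real.rpow_pos_of_pos hκ s⁻¹)
    ((div_le_iff₀ hroot).1 hl)
  rw [← Real.mul_rpow hκ.le hm₀.le, map_rpow_inv_Ici μ hf hf₀ hs (by positivity)] at hline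
  simpa (disch := positivity) only [map_rpow_inv_Ico μ hf hf₀ hs, hinner, houter] using hline

end Radius

/-- The annulus-superposition estimate for an arbitrary measure
`μ` on `ℝ³`: with `H(r) = μ{|ξ|≥r}` and `A(r₁,r₂) = μ{r₁≤|ξ|<r₂}`,
`Σ_{j≥l} A(j^s/2, m̃ j^s) ≤ H(l^s/2) + ((2m̃)^{1/s}-1)(l·A(l^s/2, m̃ l^s)
+ Σ_{j≥l} j·A(j^s,(j+1)^s))`. -/
theorem tsum_annulus_le (μ : Measure V) (s : ℕ) (hs : 1 ≤ s) (mt : ℝ) (hmt : 1 < mt)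
    (l : ℕ) (hl : 1 / (mt ^ ((1 : ℝ) / s) - 1) ≤ (l : ℝ)) :
    (∑' n : ℕ, μ {ξ : V | ((l + n : ℕ) : ℝ) ^ s / 2 ≤ ‖ξ‖ ∧ ‖ξ‖ < mt * ((l + n : ℕ) : ℝ) ^ s})
      ≤ μ {ξ : V | (l : ℝ) ^ s / 2 ≤ ‖ξ‖}
        + ENNReal.ofReal ((2 * mt) ^ ((1 : ℝ) / s) - 1) *
          ((l : ℝ≥0∞) * μ {ξ : V | (l : ℝ) ^ s / 2 ≤ ‖ξ‖ ∧ ‖ξ‖ < mt * (l : ℝ) ^ s}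
            + ∑' n : ℕ, ((l + n : ℕ) : ℝ≥0∞) *
                μ {ξ : V | ((l + n : ℕ) : ℝ) ^ s ≤ ‖ξ‖ ∧ ‖ξ‖ < ((l + n + 1 : ℕ) : ℝ) ^ s}) := by
  simpa only [Real.rpow_natCast] using tsum_annulus_le_general μ measurable_norm.aemeasurable
    norm_nonneg (Nat.cast_pos.2 hs) two_pos hmt hl

end NSE
end
end

section
/- Let v : ℝ³ → ℝ³ be continuously differentiable with compact support and divergence-free (Σ_{i=1}^3 ∂_i v_i(x) = 0 for all x), and let w : ℝ³ → ℝ³ be continuously differentiable. Then ∫_{ℝ³} ((v·∇)w)(x) · w(x) dx = 0, where ((v·∇)w)_j := Σ_{i=1}^3 v_i ∂_i w_j and · denotes the Euclidean inner product on ℝ³. -/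
/-!
Common setup: the Fourier–Plancherel transform on `L²(ℝ³;ℂ)` (Mathlib's unitary
Fourier transform with kernel `e^{-2πi x·ξ}`), characterized -- uniquely up to a.e.
equality -- by the multiplication formula against Schwartz functions; sharp
frequency cut-offs; Besov norms; and the notion of Leray–Hopf weak solution.
-/

noncomputable section

open MeasureTheory Real Complex Filter Function
open scoped ENNReal NNReal FourierTransform ComplexConjugate Classical

namespace NSE

/-!
The integrand is a divergence: `((v·∇)w) · w = ½ div (|w|² v)` when `div v = 0`. The field `|w|² v`
is `C¹` with compact support, and the integral of such a divergence is the trace of the integral of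
a Fréchet derivative, which vanishes by integration by parts against the constant `1`.
-/

section VectorCalculus

variable {E F : Type*} [NormedAddCommGroup E] [NormedSpace ℝ E]

/-- The divergence `div u` of a vector field, defined without coordinates as the trace of its
derivative. It is `0` by convention if `u` is not differentiable at `x` or `E` is
infinite-dimensional. -/
def divergence (u : E → E) (x : E) : ℝ :=
  LinearMap.trace ℝ E (fderiv ℝ u x)

/-- The convection term `(v·∇)w`, the derivative of `w` along the vector field `v`, for `w` with
values in any normed space. -/
def convection [NormedAddCommGroup F] [NormedSpace ℝ F] (v : E → E) (w : E → F) (x : E) : F :=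
  fderiv ℝ w x (v x)

theorem divergence_smul [FiniteDimensional ℝ E] {g : E → ℝ} {v : E → E} {x : E}
    (hg : DifferentiableAt ℝ g x) (hv : DifferentiableAt ℝ v x) :
    divergence (fun y => g y • v y) x = g x * divergence v x + convection v g x := by
  have htrace : LinearMap.trace ℝ E ((fderiv ℝ g x).smulRight (v x)) = fderiv ℝ g x (v x) :=
    LinearMap.trace_smulRight (fderiv ℝ g x : E →ₗ[ℝ] ℝ) (v x)
  simp only [divergence, convection, fderiv_fun_smul hg hv, ContinuousLinearMap.toLinearMap_add,
    ContinuousLinearMap.toLinearMap_smul, map_add, map_smul, smul_eq_mul, htrace]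

theorem convection_norm_sq [NormedAddCommGroup F] [InnerProductSpace ℝ F] {v : E → E} {w : E → F}
    {x : E} (hw : DifferentiableAt ℝ w x) :
    convection v (fun y => ‖w y‖ ^ 2) x = 2 * inner ℝ (convection v w x) (w x) := by
  simp [convection, hw.hasFDerivAt.norm_sq.fderiv, real_inner_comm]

variable [FiniteDimensional ℝ E] [MeasurableSpace E] [BorelSpace E] {μ : Measure E}
  [μ.IsAddHaarMeasure]

theorem integral_fderiv_eq_zero [NormedAddCommGroup F] [NormedSpace ℝ F] {f : E → F}
    (hf : Differentiable ℝ f) (hfi : Integrable f μ) (hfi' : Integrable (fderiv ℝ f) μ) :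
    ∫ x, fderiv ℝ f x ∂μ = 0 := by
  ext e
  have hparts := integral_smul_fderiv_eq_neg_fderiv_smul_of_integrable (μ := μ) (v := e)
    (f := fun _ : E => (1 : ℝ)) (g := f) (by simp)
    (by simpa using hfi'.apply_continuousLinearMap e) (by simpa using hfi)
    (fun _ _ => differentiableAt_const 1) (fun x _ => hf x)
  simpa [ContinuousLinearMap.integral_apply hfi'] using hparts

theorem integral_divergence_eq_zero {u : E → E} (hu : Differentiable ℝ u) (hui : Integrable u μ)
    (hui' : Integrable (fderiv ℝ u) μ) : ∫ x, divergence u x ∂μ = 0 := by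
  let traceL : (E →L[ℝ] E) →L[ℝ] ℝ :=
    (LinearMap.trace ℝ E ∘ₗ ContinuousLinearMap.coeLM ℝ).toContinuousLinearMap
  calc ∫ x, divergence u x ∂μ = traceL (∫ x, fderiv ℝ u x ∂μ) := traceL.integral_comp_comm hui'
    _ = 0 := by rw [integral_fderiv_eq_zero hu hui hui', map_zero]

theorem integral_divergence_eq_zero_of_hasCompactSupport {u : E → E} (hu : ContDiff ℝ 1 u)
    (hus : HasCompactSupport u) : ∫ x, divergence u x ∂μ = 0 :=
  integral_divergence_eq_zero (hu.differentiable one_ne_zero)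
    (hu.continuous.integrable_of_hasCompactSupport hus)
    ((hu.continuous_fderiv one_ne_zero).integrable_of_hasCompactSupport (hus.fderiv ℝ))

theorem integral_convection_inner_eq_zero_general [NormedAddCommGroup F] [InnerProductSpace ℝ F]
    {v : E → E} {w : E → F} (hv : ContDiff ℝ 1 v) (hvs : HasCompactSupport v)
    (hvdiv : ∀ x, divergence v x = 0) (hw : ContDiff ℝ 1 w) :
    ∫ x, inner ℝ (convection v w x) (w x) ∂μ = 0 := by
  have hw2 : ContDiff ℝ 1 (fun x => ‖w x‖ ^ 2) := hw.norm_sq ℝ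
  have hdiv x : divergence (fun y => ‖w y‖ ^ 2 • v y) x = 2 * inner ℝ (convection v w x) (w x) := by
    rw [divergence_smul (hw2.differentiable one_ne_zero x) (hv.differentiable one_ne_zero x),
      hvdiv x, mul_zero, zero_add, convection_norm_sq (hw.differentiable one_ne_zero x)]
  have hint : ∫ x, divergence (fun y => ‖w y‖ ^ 2 • v y) x ∂μ = 0 :=
    integral_divergence_eq_zero_of_hasCompactSupport (hw2.smul hv) hvs.smul_left
  simpa only [hdiv, integral_const_mul, mul_eq_zero, OfNat.ofNat_ne_zero, false_or] using hint

end VectorCalculus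

section Coordinates

variable {ι κ : Type*}

theorem fderiv_euclidean_apply [Finite κ] {E : Type*} [NormedAddCommGroup E] [NormedSpace ℝ E]
    {w : E → EuclideanSpace ℝ κ} {x : E} (hw : DifferentiableAt ℝ w x) (e : E) (j : κ) :
    fderiv ℝ (fun y => w y j) x e = fderiv ℝ w x e j := by
  have hcoord : HasFDerivAt (fun y => w y j) (PiLp.proj 2 _ j ∘L fderiv ℝ w x) x :=
    hasFDerivWithinAt_univ.1 (hasFDerivWithinAt_euclidean.1 hw.hasFDerivAt.hasFDerivWithinAt j)
  rw [hcoord.fderiv, ContinuousLinearMap.comp_apply, PiLp.proj_apply]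

variable [Fintype ι] [DecidableEq ι]

theorem divergence_eq_sum_fderiv {v : EuclideanSpace ℝ ι → EuclideanSpace ℝ ι}
    {x : EuclideanSpace ℝ ι} (hv : DifferentiableAt ℝ v x) :
    divergence v x = ∑ i, fderiv ℝ (fun y => v y i) x (EuclideanSpace.single i 1) := by
  simp [divergence, LinearMap.trace_eq_sum_inner _ (EuclideanSpace.basisFun ι ℝ),
    fderiv_euclidean_apply hv, EuclideanSpace.inner_single_left]

variable [Fintype κ] {v : EuclideanSpace ℝ ι → EuclideanSpace ℝ ι}
  {w : EuclideanSpace ℝ ι → EuclideanSpace ℝ κ} {x : EuclideanSpace ℝ ι}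

theorem convection_apply_eq_sum_fderiv (hw : DifferentiableAt ℝ w x) (j : κ) :
    convection v w x j =
      ∑ i, v x i * fderiv ℝ (fun y => w y j) x (EuclideanSpace.single i 1) := by
  have hexpand : v x = ∑ i, v x i • EuclideanSpace.single i (1 : ℝ) := by
    simpa using ((EuclideanSpace.basisFun ι ℝ).sum_repr (v x)).symm
  rw [convection, ← fderiv_euclidean_apply hw]
  conv_lhs => rw [hexpand]
  simp only [map_sum, map_smul, smul_eq_mul]

theorem inner_convection_eq_sum_fderiv (hw : DifferentiableAt ℝ w x) (z : EuclideanSpace ℝ κ) :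
    inner ℝ (convection v w x) z =
      ∑ j, (∑ i, v x i * fderiv ℝ (fun y => w y j) x (EuclideanSpace.single i 1)) * z j := by
  simp only [PiLp.inner_apply, Real.inner_apply, convection_apply_eq_sum_fderiv hw]

end Coordinates

/-- The cancellation property `((v·∇)w, w)_{L²} = 0` for a `C¹`
compactly supported divergence-free field `v` and a `C¹` field `w`. -/
theorem integral_convection_inner_eq_zero (v w : V → V)
    (hv : ContDiff ℝ 1 v) (hvs : HasCompactSupport v)
    (hvdiv : ∀ x : V, (∑ i : Fin 3, pd (fun y => v y i) i x) = 0)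
    (hw : ContDiff ℝ 1 w) :
    ∫ x : V, ∑ j : Fin 3, (∑ i : Fin 3, v x i * pd (fun y => w y j) i x) * w x j = 0 := by
  have hdiv x : divergence v x = 0 :=
    (divergence_eq_sum_fderiv (hv.differentiable one_ne_zero x)).trans (hvdiv x)
  simpa only [pd, inner_convection_eq_sum_fderiv (hw.differentiable one_ne_zero _)] using
    integral_convection_inner_eq_zero_general (μ := volume) hv hvs hdiv hw

end NSE
end
end
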